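/- arXiv:2512.00500 — 2 statements merged into one kernel-verified Lean document; each statement's English description precedes it below -/
import Mathlib

section
/- For every k ∈ ℕ, every finite set H of discounting sequences, and every finite set W ⊆ [0,1]: (a) for every v ∈ (0,1], the set {x ∈ V_{k,H,W} : x < v} has a greatest element; and (b) for every v ∈ (0,1), the set {x ∈ V_{k,H,W} : x > v} has a least element. -/
open Set

noncomputable section

/-- A discounting sequence: strictly decreasing, with values in `[0,1]` and limit `0`. -/
def IsDiscounting (η : ℕ → ℝ) : Prop :=
  StrictAnti η ∧ (∀ i, η i ∈ Set.Icc (0:ℝ) 1) ∧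
    Filter.Tendsto η Filter.atTop (nhds 0)

/-- The set
`V_{k,H,W} = {0,1} ∪ W ∪ {w·∏_{ℓ=1}^{k'} η^{(ℓ)}_{i_ℓ} : w ∈ W, k' ≤ k, i_ℓ ∈ ℕ, η^{(ℓ)} ∈ H}`. -/
def Vset (k : ℕ) (H : Set (ℕ → ℝ)) (W : Set ℝ) : Set ℝ :=
  {0, 1} ∪ W ∪
    {x | ∃ w ∈ W, ∃ k' ≤ k, ∃ idx : Fin k' → ℕ, ∃ e : Fin k' → (ℕ → ℝ),
      (∀ ℓ, e ℓ ∈ H) ∧ x = w * ∏ ℓ : Fin k', e ℓ (idx ℓ)}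

/-!
Finite sets and null sequences have only finitely many terms outside each neighbourhood of `0`, and
this property passes to finite unions and to pointwise products, hence to `V_{k,H,W}`. So only
finitely many elements of `V_{k,H,W}` lie above a given positive number, and `0` takes over as the
greatest element below `v` when there is no positive one.
-/

/-- A set has finitely many elements outside every neighbourhood of `0`, that is, it is the set of
terms of a null family. Unlike a bound on norms, this makes sense in any topological space with
zero. -/
def FiniteAwayFromZero {M : Type*} [Zero M] [TopologicalSpace M] (S : Set M) : Prop :=
  ∀ U ∈ nhds (0 : M), (S \ U).Finite

namespace FiniteAwayFromZero

section Topological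

variable {M ι : Type*} [Zero M] [TopologicalSpace M] {S T : Set M}

theorem of_finite (hS : S.Finite) : FiniteAwayFromZero S :=
  fun _ _ => hS.sdiff

theorem mono (hT : FiniteAwayFromZero T) (hST : S ⊆ T) : FiniteAwayFromZero S :=
  fun U hU => (hT U hU).subset (sdiff_subset_sdiff_left hST)

theorem union (hS : FiniteAwayFromZero S) (hT : FiniteAwayFromZero T) :
    FiniteAwayFromZero (S ∪ T) :=
  fun U hU => by simpa only [union_sdiff_distrib] using (hS U hU).union (hT U hU)

theorem biUnion {I : Set ι} (hI : I.Finite) {S : ι → Set M}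
    (hS : ∀ i ∈ I, FiniteAwayFromZero (S i)) : FiniteAwayFromZero (⋃ i ∈ I, S i) :=
  fun U hU => by simpa only [iUnion_sdiff] using hI.biUnion fun i hi => hS i hi U hU

theorem range_of_tendsto {f : ι → M} (hf : Filter.Tendsto f Filter.cofinite (nhds 0)) :
    FiniteAwayFromZero (range f) := by
  intro U hU
  have hfin : {i | f i ∉ U}.Finite := Filter.eventually_cofinite.mp (hf hU)
  refine (hfin.image f).subset ?_
  rintro _ ⟨⟨i, rfl⟩, hi⟩
  exact mem_image_of_mem f hi

theorem tendsto_coe (hS : FiniteAwayFromZero S) :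
    Filter.Tendsto ((↑) : S → M) Filter.cofinite (nhds 0) := by
  intro U hU
  have hfin : ((↑) ⁻¹' (S \ U) : Set S).Finite := (hS U hU).preimage Subtype.val_injective.injOn
  exact Filter.eventually_cofinite.mpr (hfin.subset fun x hx => ⟨x.2, hx⟩)

end Topological

section Algebraic

open scoped Pointwise

theorem mul {M : Type*} [MulZeroClass M] [TopologicalSpace M] [ContinuousMul M] {S T : Set M}
    (hS : FiniteAwayFromZero S) (hT : FiniteAwayFromZero T) : FiniteAwayFromZero (S * T) := by
  refine (range_of_tendsto (tendsto_mul_cofinite_nhds_zero hS.tendsto_coe hT.tendsto_coe)).mono ?_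
  rintro _ ⟨s, hs, t, ht, rfl⟩
  exact ⟨(⟨s, hs⟩, ⟨t, ht⟩), rfl⟩

theorem pow {M : Type*} [MonoidWithZero M] [TopologicalSpace M] [ContinuousMul M] {S : Set M}
    (hS : FiniteAwayFromZero S) (n : ℕ) : FiniteAwayFromZero (S ^ n) := by
  induction n with
  | zero => simpa only [pow_zero] using of_finite finite_one
  | succ n ih => simpa only [pow_succ] using ih.mul hS

end Algebraic

section Order

variable {M : Type*} [Zero M] [LinearOrder M] [TopologicalSpace M] [ClosedIciTopology M]
  {S : Set M} {v : M}

theorem finite_inter_Ici (hS : FiniteAwayFromZero S) (hv : 0 < v) : (S ∩ Ici v).Finite := by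
  simpa only [sdiff_eq, compl_Iio] using hS (Iio v) (Iio_mem_nhds hv)

theorem exists_isLeast_gt (hS : FiniteAwayFromZero S) (hv : 0 < v)
    (hne : {y | y ∈ S ∧ v < y}.Nonempty) : ∃ x, IsLeast {y | y ∈ S ∧ v < y} x := by
  have hfin : {y | y ∈ S ∧ v < y}.Finite :=
    (hS.finite_inter_Ici hv).subset fun _ hy => ⟨hy.1, hy.2.le⟩
  exact exists_min_image _ id hfin hne

theorem exists_isGreatest_lt (hS : FiniteAwayFromZero S) (h0 : 0 ∈ S) (hv : 0 < v) :
    ∃ x, IsGreatest {y | y ∈ S ∧ y < v} x := by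
  by_cases hpos : ∃ y ∈ S, 0 < y ∧ y < v
  · obtain ⟨y, hyS, hy0, hyv⟩ := hpos
    have hfin : (S ∩ Ico y v).Finite :=
      (hS.finite_inter_Ici hy0).subset fun _ hx => ⟨hx.1, hx.2.1⟩
    obtain ⟨x, ⟨hxS, hyx, hxv⟩, hmax⟩ := exists_max_image _ id hfin ⟨y, hyS, le_rfl, hyv⟩
    refine ⟨x, ⟨hxS, hxv⟩, fun z ⟨hzS, hzv⟩ => ?_⟩
    rcases le_total y z with hyz | hzy
    · exact hmax z ⟨hzS, hyz, hzv⟩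
    · exact hzy.trans hyx
  · push Not at hpos
    exact ⟨0, ⟨h0, hv⟩, fun z ⟨hzS, hzv⟩ => le_of_not_gt fun hz => (hpos z hzS hz).not_gt hzv⟩

end Order

end FiniteAwayFromZero

section Vset

variable (k : ℕ) (H : Set (ℕ → ℝ)) (W : Set ℝ)

theorem zero_mem_Vset : 0 ∈ Vset k H W :=
  .inl (.inl (mem_insert 0 {1}))

theorem one_mem_Vset : 1 ∈ Vset k H W :=
  .inl (.inl (mem_insert_of_mem 0 rfl))

open scoped Pointwise in
theorem Vset_subset_union_mul_pow :
    Vset k H W ⊆ {0, 1} ∪ W ∪ W * ⋃ k' ∈ Iic k, (⋃ η ∈ H, range η) ^ k' := by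
  refine union_subset_union_right _ ?_
  rintro _ ⟨w, hw, k', hk', idx, e, he, rfl⟩
  have hfactor (ℓ : Fin k') : e ℓ (idx ℓ) ∈ ⋃ η ∈ H, range η :=
    mem_biUnion (he ℓ) (mem_range_self (idx ℓ))
  have hprod : ∏ ℓ, e ℓ (idx ℓ) ∈ (⋃ η ∈ H, range η) ^ k' :=
    mem_pow.mpr ⟨fun ℓ => ⟨_, hfactor ℓ⟩, List.prod_ofFn⟩
  exact mul_mem_mul hw (mem_biUnion hk' hprod)

variable {H W}

theorem finiteAwayFromZero_Vset (hHfin : H.Finite)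
    (hH : ∀ η ∈ H, Filter.Tendsto η Filter.atTop (nhds 0)) (hWfin : W.Finite) :
    FiniteAwayFromZero (Vset k H W) := by
  have hvalues : FiniteAwayFromZero (⋃ η ∈ H, range η) :=
    .biUnion hHfin fun η hη => .range_of_tendsto (Nat.cofinite_eq_atTop ▸ hH η hη)
  have hW : FiniteAwayFromZero W := .of_finite hWfin
  have hbase : FiniteAwayFromZero ({0, 1} ∪ W) :=
    (FiniteAwayFromZero.of_finite (toFinite _)).union hW
  have hproducts := FiniteAwayFromZero.biUnion (finite_Iic k) fun k' _ => hvalues.pow k'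
  exact (hbase.union (hW.mul hproducts)).mono (Vset_subset_union_mul_pow k H W)

end Vset

theorem stmt_11_general (k : ℕ) (H : Set (ℕ → ℝ)) (hHfin : H.Finite)
    (hH : ∀ η ∈ H, Filter.Tendsto η Filter.atTop (nhds 0)) (W : Set ℝ) (hWfin : W.Finite) :
    (∀ v > 0, ∃ x, IsGreatest {y | y ∈ Vset k H W ∧ y < v} x) ∧
    (∀ v > 0, {y | y ∈ Vset k H W ∧ v < y}.Nonempty →
      ∃ x, IsLeast {y | y ∈ Vset k H W ∧ v < y} x) := by
  have hV := finiteAwayFromZero_Vset k hHfin hH hWfin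
  exact ⟨fun _ hv => hV.exists_isGreatest_lt (zero_mem_Vset k H W) hv,
    fun _ hv hne => hV.exists_isLeast_gt hv hne⟩

/-- (a) For `v ∈ (0,1]`, the set `{x ∈ V_{k,H,W} : x < v}` has a
greatest element; (b) for `v ∈ (0,1)`, the set `{x ∈ V_{k,H,W} : x > v}` has a least
element. -/
theorem stmt_11 (k : ℕ) (H : Set (ℕ → ℝ)) (hHfin : H.Finite)
    (hH : ∀ η ∈ H, IsDiscounting η)
    (W : Set ℝ) (hWfin : W.Finite) (hWsub : W ⊆ Set.Icc (0:ℝ) 1) :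
    (∀ v ∈ Set.Ioc (0:ℝ) 1, ∃ x, IsGreatest {y | y ∈ Vset k H W ∧ y < v} x) ∧
    (∀ v ∈ Set.Ioo (0:ℝ) 1, ∃ x, IsLeast {y | y ∈ Vset k H W ∧ v < y} x) := by
  obtain ⟨hbelow, habove⟩ := stmt_11_general k H hHfin (fun η hη => (hH η hη).2.2) W hWfin
  exact ⟨fun v hv => hbelow v hv.1, fun v hv => habove v hv.1 ⟨1, one_mem_Vset k H W, hv.2⟩⟩

end
end

section
/- Let η be a discounting sequence, p ∈ AP, and let φ be the quantifier-free HyperLTL_temp formula G(F_η p_π) ∨ F G ¬p_π, evaluated on a single trace t (via the assignment π ↦ t). Then there exist Boolean lassos with satisfaction value arbitrarily close to 0: for every ε > 0 there exists a Boolean lasso trace t with 0 < ⟦φ⟧(t) < ε. -/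
open Set

noncomputable section

/-- A (weighted) trace assigns to each time step and atomic proposition a weight in `[0,1]`. -/
abbrev Trace (AP : Type) : Type := ℕ → AP → unitInterval

/-- Boolean traces: all weights are `0` or `1`. -/
def IsBoolTrace {AP : Type} (t : Trace AP) : Prop :=
  ∀ i p, (t i p : ℝ) = 0 ∨ (t i p : ℝ) = 1

/-- Lassos: eventually periodic traces, i.e. traces of the form `u·v^ω`. -/
def IsLasso {AP : Type} (t : Trace AP) : Prop :=
  ∃ N c : ℕ, 0 < c ∧ ∀ n, N ≤ n → t (n + c) = t n

/-- Shifting a trace assignment: `Π[i,∞]`. -/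
def shiftA {AP Var : Type} (ρ : Var → Trace AP) (i : ℕ) : Var → Trace AP :=
  fun π n => ρ π (n + i)

/-- `prefMin g i = min_{0 ≤ j < i} g j` (with the empty minimum being `1`). -/
def prefMin (g : ℕ → ℝ) : ℕ → ℝ
  | 0 => 1
  | n + 1 => min (prefMin g n) (g n)

/-- Quantifier-free HyperLTL_temp formulas, over a set `D` (indexing the discounting
sequences). -/
inductive TQF (AP Var D : Type) : Type where
  | atom : AP → Var → TQF AP Var D
  | neg : TQF AP Var D → TQF AP Var D
  | or : TQF AP Var D → TQF AP Var D → TQF AP Var D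
  | next : TQF AP Var D → TQF AP Var D
  | untl : TQF AP Var D → TQF AP Var D → TQF AP Var D
  | untlD : D → TQF AP Var D → TQF AP Var D → TQF AP Var D

/-- HyperLTL_temp formulas: a prefix of quantifiers over a quantifier-free formula. -/
inductive TForm (AP Var D : Type) : Type where
  | qf : TQF AP Var D → TForm AP Var D
  | ex : Var → TForm AP Var D → TForm AP Var D
  | all : Var → TForm AP Var D → TForm AP Var D

variable {AP Var D : Type}

/-- Satisfaction value of quantifier-free HyperLTL_temp formulas, where `η` interprets the
discounting sequence indices. -/
def tsemQF (η : D → ℕ → ℝ) : TQF AP Var D → (Var → Trace AP) → Set (Trace AP) → ℝ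
  | .atom p π, ρ, _ => (ρ π 0 p : ℝ)
  | .neg φ, ρ, T => 1 - tsemQF η φ ρ T
  | .or φ₁ φ₂, ρ, T => max (tsemQF η φ₁ ρ T) (tsemQF η φ₂ ρ T)
  | .next φ, ρ, T => tsemQF η φ (shiftA ρ 1) T
  | .untl φ₁ φ₂, ρ, T =>
      ⨆ i : ℕ, min (tsemQF η φ₂ (shiftA ρ i) T)
        (prefMin (fun j => tsemQF η φ₁ (shiftA ρ j) T) i)
  | .untlD d φ₁ φ₂, ρ, T =>
      ⨆ i : ℕ, min (η d i * tsemQF η φ₂ (shiftA ρ i) T)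
        (prefMin (fun j => η d j * tsemQF η φ₁ (shiftA ρ j) T) i)


/-- The formula `true = p_π ∨ ¬ p_π`. -/
def ttF (p : AP) : TQF AP Unit Unit := .or (.atom p ()) (.neg (.atom p ()))

/-- The eventually operator `F φ = true U φ`. -/
def Fop (p : AP) (φ : TQF AP Unit Unit) : TQF AP Unit Unit := .untl (ttF p) φ

/-- The globally operator `G φ = ¬ F ¬ φ`. -/
def Gop (p : AP) (φ : TQF AP Unit Unit) : TQF AP Unit Unit := .neg (Fop p (.neg φ))

/-- The discounted eventually operator `F_η φ = true U_η φ`. -/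
def FdOp (p : AP) (φ : TQF AP Unit Unit) : TQF AP Unit Unit := .untlD () (ttF p) φ

/-- The formula `φ = G (F_η p_π) ∨ F G ¬ p_π`. -/
def exForm (p : AP) : TQF AP Unit Unit :=
  .or (Gop p (FdOp p (.atom p ()))) (Fop p (Gop p (.neg (.atom p ()))))

/-- The satisfaction value `⟦φ⟧(t)` of `φ = G (F_η p_π) ∨ F G ¬ p_π` on a single trace. -/
def tval {AP : Type} (η : ℕ → ℝ) (p : AP) (t : Trace AP) : ℝ :=
  tsemQF (fun _ : Unit => η) (exForm p) (fun _ : Unit => t) Set.univ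

/-! On a Boolean trace, the value of `F_η p` is determined by the distance to the next occurrence
of `p`. If `p` occurs exactly at the positions congruent to `N` modulo `N + 1`, this distance is at
most `N`, and it is `N` at position `0`, so `G (F_η p)` has value `η N`. Since `p` keeps recurring,
`F G ¬ p` has value `0`, and `φ` has value `η N`, which is positive and tends to `0` as `N`
grows. -/

lemma le_prefMin_iff {g : ℕ → ℝ} {c : ℝ} {i : ℕ} :
    c ≤ prefMin g i ↔ c ≤ 1 ∧ ∀ j < i, c ≤ g j := by
  induction i with
  | zero => simp [prefMin]
  | succ i ih => rw [prefMin, le_min_iff, ih, and_assoc, Nat.forall_lt_succ_right]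

lemma iSup_min_prefMin_mem_Icc {f g : ℕ → ℝ} (hf : ∀ i, f i ∈ Icc (0 : ℝ) 1)
    (hg : ∀ i, 0 ≤ g i) : ⨆ i, min (f i) (prefMin g i) ∈ Icc (0 : ℝ) 1 :=
  ⟨Real.iSup_nonneg fun i => le_min (hf i).1 (le_prefMin_iff.2 ⟨zero_le_one, fun j _ => hg j⟩),
    ciSup_le fun i => (min_le_left _ _).trans (hf i).2⟩

lemma tsemQF_mem_Icc {η : D → ℕ → ℝ} (hη : ∀ d i, η d i ∈ Icc (0 : ℝ) 1) (φ : TQF AP Var D)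
    (ρ : Var → Trace AP) (T : Set (Trace AP)) : tsemQF η φ ρ T ∈ Icc (0 : ℝ) 1 := by
  induction φ generalizing ρ with
  | atom p π => exact (ρ π 0 p).2
  | neg _ ih => exact Icc.one_sub_mem (ih ρ)
  | or _ _ ihφ ihψ =>
    exact ⟨le_max_of_le_left (ihφ ρ).1, max_le (ihφ ρ).2 (ihψ ρ).2⟩
  | next _ ih => exact ih (shiftA ρ 1)
  | untl _ _ ihφ ihψ =>
    exact iSup_min_prefMin_mem_Icc (fun i => ihψ (shiftA ρ i)) fun j => (ihφ (shiftA ρ j)).1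
  | untlD d _ _ ihφ ihψ =>
    exact iSup_min_prefMin_mem_Icc
      (fun i => unitInterval.mul_mem (hη d i) (ihψ (shiftA ρ i)))
      fun j => mul_nonneg (hη d j).1 (ihφ (shiftA ρ j)).1

lemma IsBoolTrace.shiftA {ρ : Var → Trace AP} {π : Var} (h : IsBoolTrace (ρ π)) (i : ℕ) :
    IsBoolTrace (shiftA ρ i π) := fun n => h (n + i)

section DerivedOperators

variable {p : AP} {ρ : Unit → Trace AP}

lemma tsemQF_ttF (η : Unit → ℕ → ℝ) (hρ : IsBoolTrace (ρ ())) (T : Set (Trace AP)) :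
    tsemQF η (ttF p) ρ T = 1 := by
  rcases hρ 0 p with h | h <;> simp [ttF, tsemQF, h]

lemma tsemQF_Fop {η : Unit → ℕ → ℝ} (hη : ∀ d i, η d i ∈ Icc (0 : ℝ) 1)
    (hρ : IsBoolTrace (ρ ())) (φ : TQF AP Unit Unit) (T : Set (Trace AP)) :
    tsemQF η (Fop p φ) ρ T = ⨆ i, tsemQF η φ (shiftA ρ i) T := by
  simp only [Fop, tsemQF, tsemQF_ttF η (hρ.shiftA _)]
  refine iSup_congr fun i => min_eq_left ?_
  have hφ : tsemQF η φ (shiftA ρ i) T ≤ 1 := (tsemQF_mem_Icc hη φ _ T).2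
  exact le_prefMin_iff.2 ⟨hφ, fun _ _ => hφ⟩

lemma tsemQF_Gop {η : Unit → ℕ → ℝ} (hη : ∀ d i, η d i ∈ Icc (0 : ℝ) 1)
    (hρ : IsBoolTrace (ρ ())) (φ : TQF AP Unit Unit) (T : Set (Trace AP)) :
    tsemQF η (Gop p φ) ρ T = ⨅ i, tsemQF η φ (shiftA ρ i) T := by
  have hbdd : BddAbove (range fun i => tsemQF η φ.neg (shiftA ρ i) T) :=
    ⟨1, forall_mem_range.2 fun i => (tsemQF_mem_Icc hη φ.neg _ T).2⟩
  calc tsemQF η (Gop p φ) ρ T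
      = 1 - ⨆ i, tsemQF η φ.neg (shiftA ρ i) T := by rw [Gop, tsemQF, tsemQF_Fop hη hρ]
    _ = ⨅ i, (1 - tsemQF η φ.neg (shiftA ρ i) T) :=
      Antitone.map_ciSup_of_continuousAt (by fun_prop) (fun _ _ h => sub_le_sub_left h 1) hbdd
    _ = ⨅ i, tsemQF η φ (shiftA ρ i) T := by simp only [tsemQF, sub_sub_cancel]

lemma tsemQF_FdOp {η : ℕ → ℝ} (hanti : Antitone η) (hη : ∀ i, η i ∈ Icc (0 : ℝ) 1)
    (hρ : IsBoolTrace (ρ ())) (φ : TQF AP Unit Unit) (T : Set (Trace AP)) :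
    tsemQF (fun _ => η) (FdOp p φ) ρ T
      = ⨆ i, η i * tsemQF (fun _ => η) φ (shiftA ρ i) T := by
  simp only [FdOp, tsemQF, tsemQF_ttF _ (hρ.shiftA _), mul_one]
  refine iSup_congr fun i => min_eq_left ?_
  have hφ : η i * tsemQF (fun _ => η) φ (shiftA ρ i) T ≤ η i :=
    mul_le_of_le_one_right (hη i).1 (tsemQF_mem_Icc (fun _ => hη) φ _ T).2
  exact hφ.trans (le_prefMin_iff.2 ⟨(hη i).2, fun j hj => hanti hj.le⟩)

end DerivedOperators

lemma tval_eq_max {η : ℕ → ℝ} (hanti : Antitone η) (hη : ∀ i, η i ∈ Icc (0 : ℝ) 1) (p : AP)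
    {t : Trace AP} (ht : IsBoolTrace t) :
    tval η p t = max (⨅ k, ⨆ i, η i * (t (i + k) p : ℝ)) (⨆ k, ⨅ i, (1 - (t (i + k) p : ℝ))) := by
  have hη' : ∀ (_ : Unit) i, η i ∈ Icc (0 : ℝ) 1 := fun _ => hη
  have hshift (k : ℕ) : IsBoolTrace (shiftA (fun _ : Unit => t) k ()) :=
    IsBoolTrace.shiftA (ρ := fun _ => t) ht k
  simp only [tval, exForm, tsemQF, tsemQF_Fop (ρ := fun _ => t) hη' ht,
    tsemQF_Gop (ρ := fun _ => t) hη' ht, tsemQF_Gop hη' (hshift _),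
    tsemQF_FdOp hanti hη (hshift _), shiftA, zero_add]

lemma iInf_iSup_mul_eq {η x : ℕ → ℝ} (hanti : Antitone η) (hη : ∀ i, 0 ≤ η i)
    (hx : ∀ i, x i ≤ 1) {N : ℕ} (hfirst : ∀ i < N, x i = 0)
    (hrec : ∀ k, ∃ i ≤ N, x (i + k) = 1) : ⨅ k, ⨆ i, η i * x (i + k) = η N := by
  have hmul (i k : ℕ) : η i * x (i + k) ≤ η i := mul_le_of_le_one_right (hη i) (hx _)
  have hlower (k : ℕ) : η N ≤ ⨆ i, η i * x (i + k) := by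
    obtain ⟨i, hiN, hi⟩ := hrec k
    have hbdd : BddAbove (range fun i => η i * x (i + k)) :=
      ⟨η 0, forall_mem_range.2 fun j => (hmul j k).trans (hanti j.zero_le)⟩
    exact le_ciSup_of_le hbdd i (by simpa only [hi, mul_one] using hanti hiN)
  have hupper : ⨆ i, η i * x (i + 0) ≤ η N := by
    refine ciSup_le fun i => ?_
    rcases lt_or_ge i N with hi | hi
    · simpa only [add_zero, hfirst i hi, mul_zero] using hη N
    · exact (hmul i 0).trans (hanti hi)
  exact le_antisymm (ciInf_le_of_le ⟨η N, forall_mem_range.2 hlower⟩ 0 hupper) (le_ciInf hlower)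

lemma iSup_iInf_one_sub_eq_zero {x : ℕ → ℝ} (hx : ∀ i, x i ≤ 1) (hrec : ∀ k, ∃ i, x (i + k) = 1) :
    ⨆ k, ⨅ i, (1 - x (i + k)) = 0 := by
  have hnonneg (k i : ℕ) : 0 ≤ 1 - x (i + k) := sub_nonneg.2 (hx _)
  have hinf (k : ℕ) : ⨅ i, (1 - x (i + k)) = 0 := by
    obtain ⟨i, hi⟩ := hrec k
    have hle : 1 - x (i + k) ≤ 0 := by rw [hi, sub_self]
    exact le_antisymm (ciInf_le_of_le ⟨0, forall_mem_range.2 (hnonneg k)⟩ i hle)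
      (le_ciInf (hnonneg k))
  simp only [hinf, ciSup_const]

lemma tval_eq_of_recurrent {η : ℕ → ℝ} (hanti : Antitone η) (hη : ∀ i, η i ∈ Icc (0 : ℝ) 1)
    {p : AP} {t : Trace AP} (ht : IsBoolTrace t) {N : ℕ} (hfirst : ∀ i < N, t i p = 0)
    (hrec : ∀ k, ∃ i ≤ N, t (i + k) p = 1) : tval η p t = η N := by
  have hle (i : ℕ) : (t i p : ℝ) ≤ 1 := (t i p).2.2
  have hfirst' : ∀ i < N, (t i p : ℝ) = 0 := fun i hi => congrArg Subtype.val (hfirst i hi)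
  have hrec' (k : ℕ) : ∃ i ≤ N, (t (i + k) p : ℝ) = 1 :=
    (hrec k).imp fun i hi => hi.imp_right (congrArg Subtype.val)
  rw [tval_eq_max hanti hη p ht,
    iInf_iSup_mul_eq (x := fun i => t i p) hanti (fun i => (hη i).1) hle hfirst' hrec',
    iSup_iInf_one_sub_eq_zero (x := fun i => t i p) hle fun k => (hrec' k).imp fun _ => And.right]
  exact max_eq_left (hη N).1

/-- The lasso `(∅^N AP)^ω`: all propositions hold at the last position of each period of length
`N + 1`, and none holds elsewhere. It realizes the satisfaction value `η N`. -/
def periodicTrace (AP : Type) (N : ℕ) : Trace AP :=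
  fun n _ => if n % (N + 1) = N then 1 else 0

lemma isBoolTrace_periodicTrace (N : ℕ) : IsBoolTrace (periodicTrace AP N) := by
  intro i p
  unfold periodicTrace
  split_ifs <;> simp

lemma isLasso_periodicTrace (N : ℕ) : IsLasso (periodicTrace AP N) :=
  ⟨0, N + 1, N.succ_pos, fun n _ => by
    funext p; simp only [periodicTrace, Nat.add_mod_right]⟩

lemma periodicTrace_eq_zero {N n : ℕ} (hn : n < N) (p : AP) : periodicTrace AP N n p = 0 := by
  have hmod : n % (N + 1) = n := Nat.mod_eq_of_lt (by lia)
  rw [periodicTrace, hmod, if_neg hn.ne]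

lemma exists_periodicTrace_eq_one (N k : ℕ) (p : AP) :
    ∃ i ≤ N, periodicTrace AP N (i + k) p = 1 := by
  refine ⟨N - k % (N + 1), Nat.sub_le _ _, if_pos ?_⟩
  have hk : k % (N + 1) ≤ N := Nat.lt_succ_iff.1 (Nat.mod_lt k N.succ_pos)
  calc (N - k % (N + 1) + k) % (N + 1)
      = (N - k % (N + 1) + k % (N + 1)) % (N + 1) := (Nat.add_mod_mod _ _ _).symm
    _ = N := by rw [Nat.sub_add_cancel hk, Nat.mod_eq_of_lt N.lt_succ_self]

lemma tval_periodicTrace {η : ℕ → ℝ} (hanti : Antitone η) (hη : ∀ i, η i ∈ Icc (0 : ℝ) 1) (p : AP)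
    (N : ℕ) : tval η p (periodicTrace AP N) = η N :=
  tval_eq_of_recurrent hanti hη (isBoolTrace_periodicTrace N)
    (fun _ hi => periodicTrace_eq_zero hi p) fun k => exists_periodicTrace_eq_one N k p

lemma IsDiscounting.pos {η : ℕ → ℝ} (hη : IsDiscounting η) (i : ℕ) : 0 < η i :=
  (hη.2.1 (i + 1)).1.trans_lt (hη.1 i.lt_succ_self)

theorem stmt_14_general {η : ℕ → ℝ} (hanti : Antitone η) (hη : ∀ i, η i ∈ Ioc (0 : ℝ) 1)
    (hlim : Filter.Tendsto η Filter.atTop (nhds 0)) (p : AP) {ε : ℝ} (hε : 0 < ε) :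
    ∃ t : Trace AP, IsBoolTrace t ∧ IsLasso t ∧ 0 < tval η p t ∧ tval η p t < ε := by
  obtain ⟨N, hN⟩ : ∃ N, η N < ε := (hlim.eventually_lt_const hε).exists
  refine ⟨periodicTrace AP N, isBoolTrace_periodicTrace N, isLasso_periodicTrace N, ?_⟩
  rw [tval_periodicTrace hanti fun i => Ioc_subset_Icc_self (hη i)]
  exact ⟨(hη N).1, hN⟩

/-- For the formula `φ = G (F_η p) ∨ F G ¬ p`, there exist Boolean lassos
with satisfaction value arbitrarily close to `0` (but positive). -/
theorem stmt_14 {AP : Type} (η : ℕ → ℝ) (hη : IsDiscounting η) (p : AP)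
    (ε : ℝ) (hε : 0 < ε) :
    ∃ t : Trace AP, IsBoolTrace t ∧ IsLasso t ∧ 0 < tval η p t ∧ tval η p t < ε :=
  stmt_14_general hη.1.antitone (fun i => ⟨hη.pos i, (hη.2.1 i).2⟩) hη.2.2 p hε

end
end
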